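/- Let g be a pseudo-Riemannian metric whose degree of mobility equals 2 on a connected neighborhood U of a point p ∈ M^n, let v be a projective vector field for g, and let L be a (1,1)-tensor satisfying the compatibility equation with g such that det L ≠ 0 on U and {Id, L} is a basis of the space of (1,1)-tensors compatible with g. Then there exist constants α, γ, ν ∈ ℝ such that 𝓛_v L = α·L² + β·L + γ·Id, where β is the function β = −𝓛_v(log|det L|) + α·tr(L) + γ·tr(L^{-1}) + ν. -/

import Mathlib

open Matrix Polynomial Filter

noncomputable section

variable {ι : Type} [Fintype ι] [DecidableEq ι]

/-- Partial derivative of a real-valued function on `ι → ℝ` in the direction of the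
`j`-th coordinate vector. -/
def pd (j : ι) (F : (ι → ℝ) → ℝ) (x : ι → ℝ) : ℝ :=
  fderiv ℝ F x (Pi.single j 1)

/-- Christoffel symbols `Γ^i_{jk}` of a metric given in local coordinates as a
matrix-valued function. -/
def christoffel (g : (ι → ℝ) → Matrix ι ι ℝ) (x : ι → ℝ) (i j k : ι) : ℝ :=
  (1 / 2) * ∑ m, (g x)⁻¹ i m *
    (pd j (fun y => g y m k) x + pd k (fun y => g y m j) x - pd m (fun y => g y j k) x)

/-- A curve is a geodesic of `g` up to reparametrisation (an unparametrized geodesic):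
`γ̈ + Γ(γ̇,γ̇) = α(t)·γ̇` for some function `α`. -/
def IsPregeodesic (g : (ι → ℝ) → Matrix ι ι ℝ) (γ : ℝ → ι → ℝ) : Prop :=
  ∃ α : ℝ → ℝ, ∀ t : ℝ, ∀ i : ι,
    deriv (fun s => deriv (fun τ => γ τ i) s) t
      + ∑ j, ∑ k, christoffel g (γ t) i j k *
          deriv (fun τ => γ τ j) t * deriv (fun τ => γ τ k) t
      = α t * deriv (fun τ => γ τ i) t

/-- `g` is a pseudo-Riemannian metric (in local coordinates) on the set `U`. -/
structure IsMetricOn (g : (ι → ℝ) → Matrix ι ι ℝ) (U : Set (ι → ℝ)) : Prop where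
  smooth : ∀ i j, ContDiffOn ℝ (⊤ : ℕ∞) (fun x => g x i j) U
  symm : ∀ x ∈ U, (g x)ᵀ = g x
  nondeg : ∀ x ∈ U, IsUnit (g x).det

/-- Two metrics are geodesically equivalent on `U`: they have the same geodesics
considered as unparametrized curves. -/
def GeodEquiv (g gb : (ι → ℝ) → Matrix ι ι ℝ) (U : Set (ι → ℝ)) : Prop :=
  ∀ γ : ℝ → ι → ℝ, ContDiff ℝ (⊤ : ℕ∞) γ → (∀ t, γ t ∈ U) →
    (IsPregeodesic g γ ↔ IsPregeodesic gb γ)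

/-- The (1,1)-tensor `L(g,ḡ)^i_j = (det ḡ / det g)^{1/(n+1)} ḡ^{ik} g_{kj}`. -/
def Lten (g gb : (ι → ℝ) → Matrix ι ι ℝ) (x : ι → ℝ) : Matrix ι ι ℝ :=
  (((gb x).det / (g x).det) ^ ((1 : ℝ) / (Fintype.card ι + 1))) • ((gb x)⁻¹ * g x)

/-- An admissible factorisation `χ = χ₁·χ₂` of the characteristic polynomial of `L`:
both factors are monic of degree ≥ 1, have smooth coefficients, and have no common
complex root at any point of `U`. -/
structure AdmissibleFact (L : (ι → ℝ) → Matrix ι ι ℝ) (U : Set (ι → ℝ))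
    (chi1 chi2 : (ι → ℝ) → Polynomial ℝ) : Prop where
  factor : ∀ x ∈ U, (L x).charpoly = chi1 x * chi2 x
  monic1 : ∀ x ∈ U, (chi1 x).Monic
  monic2 : ∀ x ∈ U, (chi2 x).Monic
  deg1 : ∀ x ∈ U, 1 ≤ (chi1 x).natDegree
  deg2 : ∀ x ∈ U, 1 ≤ (chi2 x).natDegree
  smooth1 : ∀ k, ContDiffOn ℝ (⊤ : ℕ∞) (fun x => (chi1 x).coeff k) U
  smooth2 : ∀ k, ContDiffOn ℝ (⊤ : ℕ∞) (fun x => (chi2 x).coeff k) U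
  coprime : ∀ x ∈ U, ¬ ∃ z : ℂ, aeval z (chi1 x) = 0 ∧ aeval z (chi2 x) = 0

/-- The distribution `D = ker χ(L)`. -/
def Dker (L : (ι → ℝ) → Matrix ι ι ℝ) (chi : (ι → ℝ) → Polynomial ℝ) (x : ι → ℝ) :
    Submodule ℝ (ι → ℝ) :=
  LinearMap.ker (Matrix.mulVecLin (aeval (L x) (chi x)))

/-- A distribution on `U` is integrable (involutive, which is equivalent by the
Frobenius theorem): the Lie bracket of any two smooth vector fields tangent to the
distribution is again tangent to it. -/
def IsIntegrableDist (U : Set (ι → ℝ)) (D : (ι → ℝ) → Submodule ℝ (ι → ℝ)) : Prop :=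
  ∀ u v : (ι → ℝ) → ι → ℝ, ContDiffOn ℝ (⊤ : ℕ∞) u U → ContDiffOn ℝ (⊤ : ℕ∞) v U →
    (∀ x ∈ U, u x ∈ D x) → (∀ x ∈ U, v x ∈ D x) →
    ∀ x ∈ U, (fderiv ℝ v x (u x) - fderiv ℝ u x (v x)) ∈ D x

/-- The Lie derivative of the Christoffel symbols of `g` along a vector field `v`:
`(𝓛_v Γ)^i_{jk} = v^m ∂_m Γ^i_{jk} − (∂_m v^i) Γ^m_{jk} + (∂_j v^m) Γ^i_{mk}
  + (∂_k v^m) Γ^i_{jm} + ∂_j ∂_k v^i`. -/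
def lieDerivGamma (g : (ι → ℝ) → Matrix ι ι ℝ) (v : (ι → ℝ) → ι → ℝ)
    (x : ι → ℝ) (i j k : ι) : ℝ :=
  (∑ m, v x m * pd m (fun y => christoffel g y i j k) x)
  - (∑ m, pd m (fun y => v y i) x * christoffel g x m j k)
  + (∑ m, pd j (fun y => v y m) x * christoffel g x i m k)
  + (∑ m, pd k (fun y => v y m) x * christoffel g x i j m)
  + pd j (fun y => pd k (fun z => v z i) y) x

/-- `v` is a projective vector field for `g` on `U`: its local flow takes
unparametrized geodesics to geodesics; equivalently, the Lie derivative of the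
Levi-Civita connection of `g` along `v` is of the projective form
`(𝓛_v Γ)^i_{jk} = δ^i_j φ_k + δ^i_k φ_j` for some 1-form `φ`. -/
def IsProjectiveVF (g : (ι → ℝ) → Matrix ι ι ℝ) (v : (ι → ℝ) → ι → ℝ)
    (U : Set (ι → ℝ)) : Prop :=
  ContDiffOn ℝ (⊤ : ℕ∞) v U ∧
  ∃ φ : (ι → ℝ) → ι → ℝ, ∀ x ∈ U, ∀ i j k : ι,
    lieDerivGamma g v x i j k
      = (if i = j then φ x k else 0) + (if i = k then φ x j else 0)

/-- The Lie derivative of the metric `g` (a (0,2)-tensor) along `v`. -/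
def lieDerivMetric (g : (ι → ℝ) → Matrix ι ι ℝ) (v : (ι → ℝ) → ι → ℝ)
    (x : ι → ℝ) : Matrix ι ι ℝ :=
  Matrix.of fun i j =>
    (∑ m, v x m * pd m (fun y => g y i j) x)
    + (∑ m, g x m j * pd i (fun y => v y m) x)
    + (∑ m, g x i m * pd j (fun y => v y m) x)

/-- The covariant derivative `∇_r L^i_j` of a (1,1)-tensor w.r.t. the Levi-Civita
connection of `g`. -/
def covDerivT (g L : (ι → ℝ) → Matrix ι ι ℝ) (x : ι → ℝ) (r i j : ι) : ℝ :=
  pd r (fun y => L y i j) x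
  + (∑ m, christoffel g x i r m * L x m j)
  - (∑ m, christoffel g x m r j * L x i m)

/-- `g` and `L` satisfy the compatibility equation (24):
`∇_r L^i_j = ½ (δ^i_r l_j + g^{is} l_s g_{rj})` with `l = d tr L`;
equivalently `g` and `ḡ = (det L)⁻¹ g L⁻¹` are geodesically equivalent. -/
def Compatible (g L : (ι → ℝ) → Matrix ι ι ℝ) (U : Set (ι → ℝ)) : Prop :=
  ∀ x ∈ U, ∀ r i j : ι,
    covDerivT g L x r i j
      = (1 / 2) * ((if i = r then 1 else 0) * pd j (fun y => (L y).trace) x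
          + (∑ s, (g x)⁻¹ i s * pd s (fun y => (L y).trace) x) * g x r j)

/-- The Lie derivative of a (1,1)-tensor `L` along a vector field `v`:
`(𝓛_v L)^i_j = v^m ∂_m L^i_j − (∂_m v^i) L^m_j + (∂_j v^m) L^i_m`. -/
def lieDerivEnd (v : (ι → ℝ) → ι → ℝ) (L : (ι → ℝ) → Matrix ι ι ℝ)
    (x : ι → ℝ) : Matrix ι ι ℝ :=
  Matrix.of fun i j =>
    (∑ m, v x m * pd m (fun y => L y i j) x)
    - (∑ m, pd m (fun y => v y i) x * L x m j)
    + (∑ m, pd j (fun y => v y m) x * L x i m)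

/-
The tensors compatible with `g` correspond, by `L ↦ L σ` with `σ = |det g|^{1/(n+1)} g⁻¹`, to the
weighted bivectors solving a projectively invariant linear equation, so a projective vector field
`v` acts on their space by Lie derivative. With `H = g⁻¹ 𝓛_v g` and `A = H - (tr H / (n+1)) Id` one
has `𝓛_v σ = -A σ` and `𝓛_v (L σ) = K σ`, where `K = 𝓛_v L - L A`; hence `A` and `K` are compatible.
Mobility two gives `A = a L + b Id` and `K = c L + d Id`, so that
`𝓛_v L = a L² + (b + c) L + d Id`. Multiplying by `L⁻¹` and taking traces turns the left-hand side
into `𝓛_v log |det L|`, and this identity rewrites `b + c` in the asserted form with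
`ν = (n + 1) (b + c)`.
-/

open scoped Matrix.Norms.L2Operator

section Calculus

variable {E F G : Type*} [NormedAddCommGroup E] [NormedSpace ℝ E] [NormedAddCommGroup F]
  [NormedSpace ℝ F] [NormedAddCommGroup G] [NormedSpace ℝ G] {U : Set E} {x : E}
  {m : Type*} [Fintype m] [DecidableEq m]

theorem differentiableAt_of_contDiffOn {f : E → F} (hU : IsOpen U) (hx : x ∈ U)
    (hf : ContDiffOn ℝ (⊤ : ℕ∞) f U) : DifferentiableAt ℝ f x :=
  (hf.contDiffAt (hU.mem_nhds hx)).differentiableAt (by simp)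

theorem contDiffAt_two_of_contDiffOn {f : E → F} (hU : IsOpen U) (hx : x ∈ U)
    (hf : ContDiffOn ℝ (⊤ : ℕ∞) f U) : ContDiffAt ℝ 2 f x :=
  (hf.contDiffAt (hU.mem_nhds hx)).of_le (WithTop.coe_le_coe.2 (le_top : (2 : ℕ∞) ≤ ⊤))

theorem differentiableAt_linearMap_apply [FiniteDimensional ℝ F] (T : F →ₗ[ℝ] G) {f : E → F}
    (hf : DifferentiableAt ℝ f x) : DifferentiableAt ℝ (fun y => T (f y)) x :=
  T.toContinuousLinearMap.differentiableAt.comp x hf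

theorem fderiv_linearMap_apply [FiniteDimensional ℝ F] (T : F →ₗ[ℝ] G) {f : E → F}
    (hf : DifferentiableAt ℝ f x) (w : E) :
    fderiv ℝ (fun y => T (f y)) x w = T (fderiv ℝ f x w) :=
  DFunLike.congr_fun
    ((T.toContinuousLinearMap.hasFDerivAt (x := f x)).comp x hf.hasFDerivAt).fderiv w

theorem contDiffOn_linearMap_apply [FiniteDimensional ℝ F] (T : F →ₗ[ℝ] G) {f : E → F}
    {k : ℕ∞} (hf : ContDiffOn ℝ k f U) : ContDiffOn ℝ k (fun y => T (f y)) U :=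
  T.toContinuousLinearMap.contDiff.comp_contDiffOn hf

theorem fderiv_matrix_apply {m n : Type*} [Finite m] [Finite n] {M : E → Matrix m n ℝ}
    (hM : DifferentiableAt ℝ M x) (w : E) (i : m) (j : n) :
    fderiv ℝ M x w i j = fderiv ℝ (fun y => M y i j) x w := by
  classical
  cases nonempty_fintype m
  cases nonempty_fintype n
  exact (fderiv_linearMap_apply (entryLinearMap ℝ ℝ i j) hM w).symm

theorem fderiv_matrix_transpose {m n : Type*} [Finite m] [Finite n] {M : E → Matrix m n ℝ}
    (hM : DifferentiableAt ℝ M x) (w : E) :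
    fderiv ℝ (fun y => (M y)ᵀ) x w = (fderiv ℝ M x w)ᵀ := by
  classical
  cases nonempty_fintype m
  cases nonempty_fintype n
  exact fderiv_linearMap_apply (transposeLinearEquiv m n ℝ ℝ).toLinearMap hM w

theorem contDiffOn_matrix_iff {M : E → Matrix m m ℝ} {k : ℕ∞} :
    ContDiffOn ℝ k M U ↔ ∀ i j, ContDiffOn ℝ k (fun y => M y i j) U := by
  refine ⟨fun h i j => contDiffOn_linearMap_apply (entryLinearMap ℝ ℝ i j) h, fun h => ?_⟩
  exact contDiffOn_linearMap_apply (ofLinearEquiv ℝ).toLinearMap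
    (f := fun y i j => M y i j) (contDiffOn_pi.2 fun i => contDiffOn_pi.2 fun j => h i j)

theorem contDiffOn_matrix_transpose {M : E → Matrix m m ℝ} {k : ℕ∞} (hM : ContDiffOn ℝ k M U) :
    ContDiffOn ℝ k (fun y => (M y)ᵀ) U :=
  contDiffOn_linearMap_apply (transposeLinearEquiv m m ℝ ℝ).toLinearMap hM

theorem contDiffOn_matrix_inv {M : E → Matrix m m ℝ} {k : ℕ∞} (hM : ContDiffOn ℝ k M U)
    (hdet : ∀ y ∈ U, IsUnit (M y).det) : ContDiffOn ℝ k (fun y => (M y)⁻¹) U := by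
  intro y hy
  simp only [nonsing_inv_eq_ringInverse]
  obtain ⟨u, hu⟩ := (isUnit_iff_isUnit_det _).2 (hdet y hy)
  exact (hu ▸ contDiffAt_ringInverse ℝ u).comp_contDiffWithinAt y (hM y hy)

theorem contDiffOn_vecMulVec {a b : E → m → ℝ} {k : ℕ∞} (ha : ContDiffOn ℝ k a U)
    (hb : ContDiffOn ℝ k b U) : ContDiffOn ℝ k (fun y => vecMulVec (a y) (b y)) U :=
  contDiffOn_matrix_iff.2 fun i j => (contDiffOn_pi.1 ha i).mul (contDiffOn_pi.1 hb j)

theorem contDiffOn_fderiv_apply {f : E → F} {v : E → E} (hU : IsOpen U)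
    (hf : ContDiffOn ℝ (⊤ : ℕ∞) f U) (hv : ContDiffOn ℝ (⊤ : ℕ∞) v U) :
    ContDiffOn ℝ (⊤ : ℕ∞) (fun y => fderiv ℝ f y (v y)) U :=
  (hf.fderiv_of_isOpen hU (by simp)).clm_apply hv

theorem fderiv_fderiv_apply_sub_swap {f : E → F} {a b : E → E} (hf : ContDiffAt ℝ 2 f x)
    (ha : DifferentiableAt ℝ a x) (hb : DifferentiableAt ℝ b x) :
    fderiv ℝ (fun y => fderiv ℝ f y (b y)) x (a x)
        - fderiv ℝ (fun y => fderiv ℝ f y (a y)) x (b x)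
      = fderiv ℝ f x (VectorField.lieBracket ℝ a b x) := by
  have hd : DifferentiableAt ℝ (fderiv ℝ f) x :=
    (hf.fderiv_right (m := 1) le_rfl).differentiableAt one_ne_zero
  have hsymm : IsSymmSndFDerivAt ℝ f x := hf.isSymmSndFDerivAt (by simp)
  rw [fderiv_clm_apply hd hb, fderiv_clm_apply hd ha]
  simp [VectorField.lieBracket, hsymm.eq (a x) (b x)]

theorem contDiff_det : ContDiff ℝ (⊤ : ℕ∞) (det : Matrix m m ℝ → ℝ) := by
  have entry (i j : m) : ContDiff ℝ (⊤ : ℕ∞) fun A : Matrix m m ℝ => A i j :=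
    (entryLinearMap ℝ ℝ i j).toContinuousLinearMap.contDiff
  rw [show (det : Matrix m m ℝ → ℝ) = _ from _root_.funext det_apply']
  exact ContDiff.sum fun σ _ => contDiff_const.mul (contDiff_prod fun i _ => entry _ _)

theorem hasDerivAt_det_one_add_smul (B : Matrix m m ℝ) :
    HasDerivAt (fun t : ℝ => (1 + t • B).det) B.trace 0 := by
  have h := (det (1 + (X : ℝ[X]) • B.map C)).hasDerivAt 0
  rw [derivative_det_one_add_X_smul] at h
  simpa [eval_det, ← smul_eq_mul_diagonal] using h

theorem fderiv_det_apply {A : Matrix m m ℝ} (hA : IsUnit A.det) (B : Matrix m m ℝ) :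
    fderiv ℝ det A B = A.det * (A⁻¹ * B).trace := by
  have hline : HasDerivAt (fun t : ℝ => (A + t • B).det) (A.det * (A⁻¹ * B).trace) 0 := by
    have h (t : ℝ) : (A + t • B).det = A.det * (1 + t • (A⁻¹ * B)).det := by
      rw [← det_mul, Matrix.mul_add, Matrix.mul_smul, mul_nonsing_inv_cancel_left _ _ hA,
        Matrix.mul_one]
    simpa only [h] using (hasDerivAt_det_one_add_smul _).const_mul A.det
  have hdiff := contDiff_det.differentiable (by simp) A
  exact hdiff.lineDeriv_eq_fderiv.symm.trans hline.deriv

theorem fderiv_log_abs_det {M : E → Matrix m m ℝ} (hM : DifferentiableAt ℝ M x)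
    (hdet : IsUnit (M x).det) (w : E) :
    fderiv ℝ (fun y => Real.log |(M y).det|) x w = ((M x)⁻¹ * fderiv ℝ M x w).trace := by
  have hdiff := contDiff_det.differentiable (by simp) (M x)
  have h := ((hdiff.hasFDerivAt.comp x hM.hasFDerivAt).log hdet.ne_zero).fderiv
  simp only [Function.comp_apply] at h
  simp [Real.log_abs, h, fderiv_det_apply hdet, hdet.ne_zero]

end Calculus

section HomDeriv

variable {E 𝔸 : Type*} [NormedAddCommGroup E] [NormedSpace ℝ E] [NormedRing 𝔸]
  [NormedAlgebra ℝ 𝔸]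

/-- The derivative along `w` of a field `X` of homomorphisms from one bundle with connection to
another, where `S` and `T` are the connection forms of the target and the source evaluated
at `w`. -/
def homDeriv (w : E) (S T : 𝔸) (X : E → 𝔸) (x : E) : 𝔸 :=
  fderiv ℝ X x w + S * X x - X x * T

variable {X Y : E → 𝔸} {U : Set E} {x : E}

theorem homDeriv_congr (hU : IsOpen U) (hx : x ∈ U) (h : ∀ y ∈ U, X y = Y y) (w : E) (S T : 𝔸) :
    homDeriv w S T X x = homDeriv w S T Y x := by
  have hXY : X =ᶠ[nhds x] Y := eventually_of_mem (hU.mem_nhds hx) h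
  rw [homDeriv, homDeriv, hXY.fderiv_eq, h x hx]

theorem homDeriv_add (hX : DifferentiableAt ℝ X x) (hY : DifferentiableAt ℝ Y x) (w : E)
    (S T : 𝔸) :
    homDeriv w S T (fun y => X y + Y y) x = homDeriv w S T X x + homDeriv w S T Y x := by
  simp only [homDeriv, fderiv_fun_add hX hY, _root_.add_apply]
  noncomm_ring

theorem homDeriv_sub (hX : DifferentiableAt ℝ X x) (hY : DifferentiableAt ℝ Y x) (w : E)
    (S T : 𝔸) :
    homDeriv w S T (fun y => X y - Y y) x = homDeriv w S T X x - homDeriv w S T Y x := by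
  simp only [homDeriv, fderiv_fun_sub hX hY, _root_.sub_apply]
  noncomm_ring

theorem homDeriv_const_smul (hX : DifferentiableAt ℝ X x) (c : ℝ) (w : E) (S T : 𝔸) :
    homDeriv w S T (fun y => c • X y) x = c • homDeriv w S T X x := by
  simp only [homDeriv, fderiv_fun_const_smul hX, _root_.smul_apply, mul_smul_comm, smul_mul_assoc,
    smul_add, smul_sub]

theorem homDeriv_sub_forms (w : E) (S S' T T' : 𝔸) (X : E → 𝔸) (x : E) :
    homDeriv w (S - S') (T - T') X x = homDeriv w S T X x - (S' * X x - X x * T') := by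
  simp only [homDeriv]
  noncomm_ring

theorem homDeriv_smul_one {f : E → ℝ} (hf : DifferentiableAt ℝ f x) (w : E) (T : 𝔸) :
    homDeriv w T T (fun y => f y • (1 : 𝔸)) x = fderiv ℝ f x w • (1 : 𝔸) := by
  simp [homDeriv, fderiv_smul_const hf]

theorem homDeriv_mul (hX : DifferentiableAt ℝ X x) (hY : DifferentiableAt ℝ Y x) (w : E)
    (R S T : 𝔸) :
    homDeriv w R T (fun y => X y * Y y) x
      = homDeriv w R S X x * Y x + X x * homDeriv w S T Y x := by
  simp only [homDeriv, fderiv_fun_mul' hX hY, _root_.add_apply, _root_.smul_apply, smul_eq_mul,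
    MulOpposite.smul_eq_mul_unop, MulOpposite.unop_op]
  noncomm_ring

theorem fderiv_homDeriv_apply {v : E → E} {S T : E → 𝔸} (hX : DifferentiableAt ℝ X x)
    (hdX : DifferentiableAt ℝ (fun y => fderiv ℝ X y (v y)) x) (hS : DifferentiableAt ℝ S x)
    (hT : DifferentiableAt ℝ T x) (w : E) :
    fderiv ℝ (fun y => homDeriv (v y) (S y) (T y) X y) x w
      = fderiv ℝ (fun y => fderiv ℝ X y (v y)) x w
        + (fderiv ℝ S x w * X x + S x * fderiv ℝ X x w)
        - (fderiv ℝ X x w * T x + X x * fderiv ℝ T x w) := by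
  simp only [homDeriv]
  rw [fderiv_fun_sub (hdX.fun_add (hS.fun_mul hX)) (hX.fun_mul hT),
    fderiv_fun_add hdX (hS.fun_mul hX), fderiv_fun_mul' hS hX, fderiv_fun_mul' hX hT]
  simp [add_comm]

/-- The value on the vector fields `a` and `b` of the curvature of a connection whose form is `Sa`
on `a` and `Sb` on `b`. -/
def curvForm (a b : E → E) (Sa Sb : E → 𝔸) (x : E) : 𝔸 :=
  fderiv ℝ Sb x (a x) - fderiv ℝ Sa x (b x) + ⁅Sa x, Sb x⁆

theorem homDeriv_homDeriv_sub_swap {a b : E → E} {Sa Sb Ta Tb : E → 𝔸}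
    (hX : ContDiffAt ℝ 2 X x) (ha : DifferentiableAt ℝ a x) (hb : DifferentiableAt ℝ b x)
    (hSa : DifferentiableAt ℝ Sa x) (hSb : DifferentiableAt ℝ Sb x)
    (hTa : DifferentiableAt ℝ Ta x) (hTb : DifferentiableAt ℝ Tb x) :
    homDeriv (a x) (Sa x) (Ta x) (fun y => homDeriv (b y) (Sb y) (Tb y) X y) x
        - homDeriv (b x) (Sb x) (Tb x) (fun y => homDeriv (a y) (Sa y) (Ta y) X y) x
      = homDeriv (VectorField.lieBracket ℝ a b x) (curvForm a b Sa Sb x)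
          (curvForm a b Ta Tb x) X x := by
  have hX' : DifferentiableAt ℝ X x := hX.differentiableAt two_ne_zero
  have hdX : DifferentiableAt ℝ (fderiv ℝ X) x :=
    (hX.fderiv_right (m := 1) le_rfl).differentiableAt one_ne_zero
  have hswap := fderiv_fderiv_apply_sub_swap hX ha hb
  rw [sub_eq_iff_eq_add] at hswap
  have hab := fderiv_homDeriv_apply hX' (hdX.clm_apply hb) hSb hTb (a x)
  have hba := fderiv_homDeriv_apply hX' (hdX.clm_apply ha) hSa hTa (b x)
  simp only [homDeriv, curvForm, Ring.lie_def] at hab hba ⊢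
  rw [hab, hba, hswap]
  noncomm_ring

theorem contDiffOn_homDeriv {v : E → E} {S T : E → 𝔸} (hU : IsOpen U)
    (hX : ContDiffOn ℝ (⊤ : ℕ∞) X U) (hv : ContDiffOn ℝ (⊤ : ℕ∞) v U)
    (hS : ContDiffOn ℝ (⊤ : ℕ∞) S U) (hT : ContDiffOn ℝ (⊤ : ℕ∞) T U) :
    ContDiffOn ℝ (⊤ : ℕ∞) (fun y => homDeriv (v y) (S y) (T y) X y) U :=
  ((contDiffOn_fderiv_apply hU hX hv).add (hS.mul hX)).sub (hX.mul hT)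

end HomDeriv

section MatrixFields

variable {E m : Type*} [NormedAddCommGroup E] [NormedSpace ℝ E] [Fintype m] [DecidableEq m]
  {X : E → Matrix m m ℝ} {x : E}

theorem trace_homDeriv (hX : DifferentiableAt ℝ X x) (w : E) (T : Matrix m m ℝ) :
    (homDeriv w T T X x).trace = fderiv ℝ (fun y => (X y).trace) x w := by
  rw [homDeriv, trace_sub, trace_add, trace_mul_comm, add_sub_cancel_right]
  exact (fderiv_linearMap_apply (traceLinearMap m ℝ ℝ) hX w).symm

theorem transpose_homDeriv (hX : DifferentiableAt ℝ X x) (w : E) (S T : Matrix m m ℝ) :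
    (homDeriv w S T X x)ᵀ = homDeriv w (-Tᵀ) (-Sᵀ) (fun y => (X y)ᵀ) x := by
  simp only [homDeriv, fderiv_matrix_transpose hX, transpose_sub, transpose_add, transpose_mul]
  noncomm_ring

theorem curvForm_neg_transpose {a b : E → E} {Sa Sb : E → Matrix m m ℝ}
    (hSa : DifferentiableAt ℝ Sa x) (hSb : DifferentiableAt ℝ Sb x) :
    curvForm a b (fun y => -(Sa y)ᵀ) (fun y => -(Sb y)ᵀ) x = -(curvForm a b Sa Sb x)ᵀ := by
  simp only [curvForm, fderiv_fun_neg, _root_.neg_apply, fderiv_matrix_transpose hSa,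
    fderiv_matrix_transpose hSb, Ring.lie_def, transpose_add, transpose_sub, transpose_mul]
  noncomm_ring

theorem homDeriv_vecMulVec {b : E → m → ℝ} (hb : DifferentiableAt ℝ b x) (a : m → ℝ) (w : E)
    (S T : Matrix m m ℝ) :
    homDeriv w S T (fun y => vecMulVec a (b y)) x
      = vecMulVec a (fderiv ℝ b x w - b x ᵥ* T) + vecMulVec (S *ᵥ a) (b x) := by
  have hfderiv : fderiv ℝ (fun y => vecMulVec a (b y)) x w = vecMulVec a (fderiv ℝ b x w) :=
    fderiv_linearMap_apply (vecMulVecBilin ℝ ℝ a) hb w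
  rw [homDeriv, hfderiv, mul_vecMulVec, vecMulVec_mul, vecMulVec_sub]
  abel

end MatrixFields

section MetricAdjoint

variable {m R : Type*} [Fintype m] [DecidableEq m] [CommRing R]

/-- The adjoint `X ↦ h⁻¹ Xᵀ h` with respect to the bilinear form with matrix `h`. -/
def metricAdjoint (h : Matrix m m R) : Matrix m m R →ₗ[R] Matrix m m R :=
  LinearMap.mulLeft R h⁻¹ ∘ₗ LinearMap.mulRight R h ∘ₗ (transposeLinearEquiv m m R R).toLinearMap

variable {h : Matrix m m R}

theorem metricAdjoint_apply (h X : Matrix m m R) : metricAdjoint h X = h⁻¹ * (Xᵀ * h) := rfl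

theorem mul_metricAdjoint (hh : IsUnit h.det) (X : Matrix m m R) :
    h * metricAdjoint h X = Xᵀ * h :=
  mul_nonsing_inv_cancel_left h _ hh

theorem metricAdjoint_mul (hh : IsUnit h.det) (X Y : Matrix m m R) :
    metricAdjoint h (X * Y) = metricAdjoint h Y * metricAdjoint h X := by
  rw [metricAdjoint_apply h Y, Matrix.mul_assoc, Matrix.mul_assoc, mul_metricAdjoint hh,
    metricAdjoint_apply, transpose_mul, Matrix.mul_assoc]

theorem metricAdjoint_one (hh : IsUnit h.det) : metricAdjoint h 1 = 1 := by
  rw [metricAdjoint_apply, transpose_one, Matrix.one_mul, nonsing_inv_mul h hh]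

theorem trace_metricAdjoint (hh : IsUnit h.det) (X : Matrix m m R) :
    (metricAdjoint h X).trace = X.trace := by
  rw [metricAdjoint_apply, trace_mul_comm, mul_nonsing_inv_cancel_right _ _ hh, trace_transpose]

theorem metricAdjoint_eq_self_iff (hsymm : hᵀ = h) (hh : IsUnit h.det) {X : Matrix m m R} :
    metricAdjoint h X = X ↔ (h * X)ᵀ = h * X := by
  rw [transpose_mul, hsymm, ← mul_metricAdjoint hh]
  exact ⟨fun hX => by rw [hX], fun hX => ((isUnit_iff_isUnit_det h).2 hh).mul_left_cancel hX⟩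

end MetricAdjoint

section MetricSymm

variable {m K : Type*} [Fintype m] [DecidableEq m] [Field K]

/-- The self-adjoint part of an endomorphism with respect to the bilinear form with matrix `h`. -/
def metricSymm (h : Matrix m m K) : Matrix m m K →ₗ[K] Matrix m m K :=
  (1 / 2 : K) • (LinearMap.id + metricAdjoint h)

variable {h : Matrix m m K}

theorem metricSymm_apply (h X : Matrix m m K) :
    metricSymm h X = (1 / 2 : K) • (X + metricAdjoint h X) := rfl

theorem trace_metricSymm [NeZero (2 : K)] (hh : IsUnit h.det) (X : Matrix m m K) :
    (metricSymm h X).trace = X.trace := by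
  rw [metricSymm_apply, trace_smul, trace_add, trace_metricAdjoint hh, smul_eq_mul]
  field_simp
  ring

theorem metricSymm_mul (hh : IsUnit h.det) (X : Matrix m m K) {Y : Matrix m m K}
    (hY : metricAdjoint h Y = Y) :
    metricSymm h X * Y = metricSymm h (X * Y) + (1 / 2 : K) • ⁅metricAdjoint h X, Y⁆ := by
  rw [metricSymm_apply, metricSymm_apply, metricAdjoint_mul hh, hY, Ring.lie_def, ← smul_add,
    Matrix.smul_mul, Matrix.add_mul]
  congr 1
  abel

theorem lie_add_mul_metricSymm [NeZero (2 : K)] (hh : IsUnit h.det) (X : Matrix m m K)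
    {Y : Matrix m m K} (hY : metricAdjoint h Y = Y) :
    ⁅X, Y⁆ + Y * metricSymm h ((2 : K) • X) = metricSymm h ((2 : K) • (X * Y)) := by
  rw [map_smul, map_smul, metricSymm_apply, metricSymm_apply, metricAdjoint_mul hh, hY,
    Ring.lie_def, smul_smul, smul_smul, mul_one_div_cancel two_ne_zero, one_smul, one_smul,
    Matrix.mul_add]
  abel

end MetricSymm

/-- The connection matrix `Γ_w` with entries `(Γ_w)^i_j = w^k Γ^i_{kj}`, so that
`∇_w = ∂_w + Γ_w` on vector fields. -/
def connMatrix (g : (ι → ℝ) → Matrix ι ι ℝ) (w x : ι → ℝ) : Matrix ι ι ℝ :=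
  Matrix.of fun i j => ∑ k, w k * christoffel g x i k j

/-- The covariant derivative `∇_w L` of a field of endomorphisms. -/
def covDeriv (g : (ι → ℝ) → Matrix ι ι ℝ) (w : ι → ℝ) (L : (ι → ℝ) → Matrix ι ι ℝ)
    (x : ι → ℝ) : Matrix ι ι ℝ :=
  homDeriv w (connMatrix g w x) (connMatrix g w x) L x

/-- The covariant derivative `∇_w B` of a field of bilinear forms. -/
def covDerivBilin (g : (ι → ℝ) → Matrix ι ι ℝ) (w : ι → ℝ) (B : (ι → ℝ) → Matrix ι ι ℝ)
    (x : ι → ℝ) : Matrix ι ι ℝ :=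
  homDeriv w (-(connMatrix g w x)ᵀ) (connMatrix g w x) B x

/-- The Jacobian matrix `∂_j v^i` of a vector field. -/
def jacobian (v : (ι → ℝ) → ι → ℝ) (x : ι → ℝ) : Matrix ι ι ℝ :=
  Matrix.of fun i j => pd j (fun y => v y i) x

/-- The differential `d tr L` of the trace of `L`. -/
def dTrace (L : (ι → ℝ) → Matrix ι ι ℝ) (x : ι → ℝ) : ι → ℝ :=
  fun j => pd j (fun y => (L y).trace) x

/-- The Lie derivative along `v` of the Levi-Civita connection, contracted with `w` in its first
lower index. -/
def lieDerivConn (g : (ι → ℝ) → Matrix ι ι ℝ) (v : (ι → ℝ) → ι → ℝ) (w x : ι → ℝ) :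
    Matrix ι ι ℝ :=
  fderiv ℝ (connMatrix g w) x (v x) - jacobian v x * connMatrix g w x
    + connMatrix g (jacobian v x *ᵥ w) x + connMatrix g w x * jacobian v x
    + fderiv ℝ (jacobian v) x w

section Coordinates

variable {U : Set (ι → ℝ)} {g L : (ι → ℝ) → Matrix ι ι ℝ} {v : (ι → ℝ) → ι → ℝ} {x : ι → ℝ}

theorem fderiv_apply_eq_sum_pd (F : (ι → ℝ) → ℝ) (x w : ι → ℝ) :
    fderiv ℝ F x w = ∑ k, w k * pd k F x := by
  conv_lhs => rw [pi_eq_sum_univ' w]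
  simp [pd, map_sum]

theorem contDiffOn_pd {F : (ι → ℝ) → ℝ} (hU : IsOpen U) (hF : ContDiffOn ℝ (⊤ : ℕ∞) F U) (k : ι) :
    ContDiffOn ℝ (⊤ : ℕ∞) (pd k F) U :=
  contDiffOn_fderiv_apply hU hF contDiffOn_const

theorem jacobian_mulVec (hv : DifferentiableAt ℝ v x) (w : ι → ℝ) :
    jacobian v x *ᵥ w = fderiv ℝ v x w := by
  ext i
  have h := fderiv_apply_eq_sum_pd (fun y => v y i) x w
  rw [fderiv_apply hv i] at h
  simpa [jacobian, mulVec, dotProduct, mul_comm] using h.symm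

theorem contDiffOn_jacobian (hU : IsOpen U) (hv : ContDiffOn ℝ (⊤ : ℕ∞) v U) :
    ContDiffOn ℝ (⊤ : ℕ∞) (jacobian v) U :=
  contDiffOn_matrix_iff.2 fun i j => contDiffOn_pd hU (contDiffOn_pi.1 hv i) j

theorem lieDerivEnd_eq_homDeriv (hL : DifferentiableAt ℝ L x) :
    lieDerivEnd v L x = homDeriv (v x) (-jacobian v x) (-jacobian v x) L x := by
  ext i j
  simp [lieDerivEnd, homDeriv, fderiv_matrix_apply hL, fderiv_apply_eq_sum_pd, Matrix.mul_apply,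
    jacobian, mul_comm, sub_eq_add_neg]

theorem lieDerivMetric_eq_homDeriv (hg : DifferentiableAt ℝ g x) :
    lieDerivMetric g v x = homDeriv (v x) (jacobian v x)ᵀ (-jacobian v x) g x := by
  ext i j
  simp [lieDerivMetric, homDeriv, fderiv_matrix_apply hg, fderiv_apply_eq_sum_pd,
    Matrix.mul_apply, jacobian, mul_comm]

theorem contDiffOn_dTrace (hU : IsOpen U) (hL : ContDiffOn ℝ (⊤ : ℕ∞) L U) :
    ContDiffOn ℝ (⊤ : ℕ∞) (dTrace L) U :=
  contDiffOn_pi.2 fun _ =>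
    contDiffOn_pd hU (contDiffOn_linearMap_apply (traceLinearMap ι ℝ ℝ) hL) _

theorem covDeriv_apply (hL : DifferentiableAt ℝ L x) (w : ι → ℝ) (i j : ι) :
    covDeriv g w L x i j = ∑ r, w r * covDerivT g L x r i j := by
  simp only [covDeriv, homDeriv, Matrix.sub_apply, Matrix.add_apply, fderiv_matrix_apply hL,
    fderiv_apply_eq_sum_pd, Matrix.mul_apply, connMatrix, Matrix.of_apply, covDerivT, mul_add,
    mul_sub, Finset.sum_add_distrib, Finset.sum_sub_distrib, Finset.mul_sum, Finset.sum_mul]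
  rw [Finset.sum_comm (f := fun k r => w r * christoffel g x i r k * L x k j),
    Finset.sum_comm (f := fun k r => L x i k * (w r * christoffel g x k r j))]
  simp only [mul_left_comm, mul_comm]

theorem metricSymm_vecMulVec_apply (h : Matrix ι ι ℝ) (w ω : ι → ℝ) (i j : ι) :
    metricSymm h (vecMulVec w ω) i j = ∑ r, w r * ((1 / 2) *
      ((if i = r then 1 else 0) * ω j + (∑ s, h⁻¹ i s * ω s) * h r j)) := by
  have hprod : metricSymm h (vecMulVec w ω) i j
      = 1 / 2 * (w i * ω j + (h⁻¹ *ᵥ ω) i * (w ᵥ* h) j) := by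
    simp [metricSymm, metricAdjoint_apply, transpose_vecMulVec, vecMulVec_mul, mul_vecMulVec,
      vecMulVec_apply, mul_add]
  have hfirst : ∑ r, w r * (1 / 2 * ((if i = r then 1 else 0) * ω j)) = 1 / 2 * (w i * ω j) := by
    simp [mul_left_comm]
  simp only [hprod, mul_add, Finset.sum_add_distrib, hfirst]
  simp only [mulVec, vecMul, dotProduct, Finset.mul_sum, mul_left_comm]

theorem compatible_iff_covDeriv (hU : IsOpen U) (hL : ContDiffOn ℝ (⊤ : ℕ∞) L U) :
    Compatible g L U ↔
      ∀ x ∈ U, ∀ w, covDeriv g w L x = metricSymm (g x) (vecMulVec w (dTrace L x)) := by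
  have hdiff {x} (hx : x ∈ U) : DifferentiableAt ℝ L x := differentiableAt_of_contDiffOn hU hx hL
  refine ⟨fun h x hx w => ?_, fun h x hx r i j => ?_⟩
  · ext i j
    simp only [covDeriv_apply (hdiff hx), metricSymm_vecMulVec_apply, h x hx, dTrace]
  · have hr := congrFun₂ (h x hx (Pi.single r 1)) i j
    rw [covDeriv_apply (hdiff hx), metricSymm_vecMulVec_apply] at hr
    simpa only [dTrace, Pi.single_apply, ite_mul, one_mul, zero_mul, Finset.sum_ite_eq',
      Finset.mem_univ, if_true] using hr

theorem compatible_of_covDeriv (hU : IsOpen U) (hg : IsMetricOn g U)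
    (hL : ContDiffOn ℝ (⊤ : ℕ∞) L U)
    (h : ∀ x ∈ U, ∃ ω, ∀ w, covDeriv g w L x = metricSymm (g x) (vecMulVec w ω)) :
    Compatible g L U := by
  refine (compatible_iff_covDeriv hU hL).2 fun x hx => ?_
  obtain ⟨ω, hω⟩ := h x hx
  have hLx : DifferentiableAt ℝ L x := differentiableAt_of_contDiffOn hU hx hL
  have htrace (w : ι → ℝ) : fderiv ℝ (fun y => (L y).trace) x w = w ⬝ᵥ ω := by
    rw [← trace_homDeriv hLx w (connMatrix g w x), ← covDeriv, hω,
      trace_metricSymm (hg.nondeg x hx), trace_vecMulVec]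
  have hdTrace : dTrace L x = ω := by
    ext j
    rw [dTrace, pd, htrace, single_one_dotProduct]
  rwa [hdTrace]

theorem IsMetricOn.contDiffOn (hg : IsMetricOn g U) : ContDiffOn ℝ (⊤ : ℕ∞) g U :=
  contDiffOn_matrix_iff.2 hg.smooth

theorem contDiffOn_christoffel (hU : IsOpen U) (hg : IsMetricOn g U) (i j k : ι) :
    ContDiffOn ℝ (⊤ : ℕ∞) (fun x => christoffel g x i j k) U := by
  have hinv := contDiffOn_matrix_iff.1 (contDiffOn_matrix_inv hg.contDiffOn hg.nondeg)
  have hpd (a b c : ι) := contDiffOn_pd hU (hg.smooth a b) c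
  exact contDiffOn_const.mul <| ContDiffOn.sum fun m _ =>
    (hinv i m).mul (((hpd m k j).add (hpd m j k)).sub (hpd j k m))

theorem contDiffOn_connMatrix (hU : IsOpen U) (hg : IsMetricOn g U) (w : ι → ℝ) :
    ContDiffOn ℝ (⊤ : ℕ∞) (connMatrix g w) U :=
  contDiffOn_matrix_iff.2 fun i j => ContDiffOn.sum fun k _ =>
    contDiffOn_const.mul (contDiffOn_christoffel hU hg i k j)

theorem lieDerivConn_apply (hU : IsOpen U) (hg : IsMetricOn g U)
    (hv : ContDiffOn ℝ (⊤ : ℕ∞) v U) (hx : x ∈ U) (w : ι → ℝ) (i j : ι) :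
    lieDerivConn g v w x i j = ∑ k, w k * lieDerivGamma g v x i k j := by
  have hΓ (i j k : ι) :=
    differentiableAt_of_contDiffOn hU hx (contDiffOn_christoffel hU hg i j k)
  have hΓw := differentiableAt_of_contDiffOn hU hx (contDiffOn_connMatrix hU hg w)
  have hJ := differentiableAt_of_contDiffOn hU hx (contDiffOn_jacobian hU hv)
  have hconn : fderiv ℝ (connMatrix g w) x (v x) i j
      = ∑ k, w k * ∑ m, v x m * pd m (fun y => christoffel g y i k j) x := by
    rw [fderiv_matrix_apply hΓw]
    simp only [connMatrix, Matrix.of_apply]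
    rw [fderiv_fun_sum fun k _ => (hΓ i k j).const_mul (w k)]
    simp only [_root_.sum_apply, fderiv_const_mul (hΓ _ _ _), _root_.smul_apply, smul_eq_mul,
      fderiv_apply_eq_sum_pd]
  simp only [lieDerivConn, Matrix.sub_apply, Matrix.add_apply, hconn,
    fderiv_matrix_apply hJ, fderiv_apply_eq_sum_pd _ _ w, Matrix.mul_apply, connMatrix,
    Matrix.of_apply, lieDerivGamma, mulVec, dotProduct, jacobian, mul_add, mul_sub,
    Finset.sum_add_distrib, Finset.sum_sub_distrib, Finset.mul_sum, Finset.sum_mul]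
  refine congrArg₂ _ (congrArg₂ _ (congrArg₂ _ (congrArg₂ _ rfl ?_) ?_) ?_) rfl <;>
    rw [Finset.sum_comm] <;> simp only [mul_assoc, mul_left_comm, mul_comm]

theorem IsProjectiveVF.exists_lieDerivConn_eq (hU : IsOpen U) (hg : IsMetricOn g U)
    (hv : IsProjectiveVF g v U) : ∃ φ : (ι → ℝ) → ι → ℝ, ∀ x ∈ U, ∀ w,
      lieDerivConn g v w x = vecMulVec w (φ x) + (w ⬝ᵥ φ x) • (1 : Matrix ι ι ℝ) := by
  obtain ⟨hvsmooth, φ, hφ⟩ := hv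
  refine ⟨φ, fun x hx w => ?_⟩
  ext i j
  simp [lieDerivConn_apply hU hg hvsmooth hx, hφ x hx, mul_add, Finset.sum_add_distrib,
    vecMulVec_apply, dotProduct, Matrix.one_apply, Finset.sum_ite_irrel]

theorem sum_metric_mul_christoffel (hg : IsUnit (g x).det) (i j k : ι) :
    ∑ a, g x i a * christoffel g x a j k = (1 / 2) *
      (pd j (fun y => g y i k) x + pd k (fun y => g y i j) x - pd i (fun y => g y j k) x) := by
  let c : ι → ℝ := fun m =>
    pd j (fun y => g y m k) x + pd k (fun y => g y m j) x - pd m (fun y => g y j k) x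
  have hchristoffel : (fun a => christoffel g x a j k) = (1 / 2 : ℝ) • ((g x)⁻¹ *ᵥ c) := rfl
  have h : g x *ᵥ (fun a => christoffel g x a j k) = (1 / 2 : ℝ) • c := by
    rw [hchristoffel, mulVec_smul, mulVec_mulVec, mul_nonsing_inv _ hg, one_mulVec]
  exact congrFun h i

theorem metric_mul_connMatrix_apply (hg : IsUnit (g x).det) (w : ι → ℝ) (i j : ι) :
    (g x * connMatrix g w x) i j = ∑ k, w k * ((1 / 2) *
      (pd k (fun y => g y i j) x + pd j (fun y => g y i k) x - pd i (fun y => g y k j) x)) := by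
  simp only [← sum_metric_mul_christoffel hg, Matrix.mul_apply, connMatrix, Matrix.of_apply,
    Finset.mul_sum]
  rw [Finset.sum_comm]
  simp only [mul_left_comm]

theorem pd_metric_comm (hU : IsOpen U) (hg : IsMetricOn g U) (hx : x ∈ U) (i j k : ι) :
    pd k (fun y => g y i j) x = pd k (fun y => g y j i) x := by
  have h : (fun y => g y i j) =ᶠ[nhds x] fun y => g y j i :=
    eventually_of_mem (hU.mem_nhds hx) fun y hy => congrFun₂ (hg.symm y hy) j i
  rw [pd, h.fderiv_eq, pd]

theorem fderiv_metric_apply (hU : IsOpen U) (hg : IsMetricOn g U) (hx : x ∈ U) (w : ι → ℝ) :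
    fderiv ℝ g x w = (g x * connMatrix g w x)ᵀ + g x * connMatrix g w x := by
  have hgx : DifferentiableAt ℝ g x := differentiableAt_of_contDiffOn hU hx hg.contDiffOn
  ext i j
  rw [fderiv_matrix_apply hgx, fderiv_apply_eq_sum_pd, Matrix.add_apply, Matrix.transpose_apply,
    metric_mul_connMatrix_apply (hg.nondeg x hx), metric_mul_connMatrix_apply (hg.nondeg x hx),
    ← Finset.sum_add_distrib]
  refine Finset.sum_congr rfl fun k _ => ?_
  rw [pd_metric_comm hU hg hx j i k, pd_metric_comm hU hg hx j k i,
    pd_metric_comm hU hg hx i k j]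
  ring

theorem covDerivBilin_metric (hU : IsOpen U) (hg : IsMetricOn g U) (hx : x ∈ U) (w : ι → ℝ) :
    covDerivBilin g w g x = 0 := by
  rw [covDerivBilin, homDeriv, fderiv_metric_apply hU hg hx, transpose_mul, hg.symm x hx]
  noncomm_ring

theorem metric_mul_covDeriv {X : (ι → ℝ) → Matrix ι ι ℝ} (hU : IsOpen U) (hg : IsMetricOn g U)
    (hx : x ∈ U) (hX : DifferentiableAt ℝ X x) (w : ι → ℝ) :
    g x * covDeriv g w X x = covDerivBilin g w (fun y => g y * X y) x := by
  have hgx := differentiableAt_of_contDiffOn hU hx hg.contDiffOn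
  rw [covDerivBilin, homDeriv_mul hgx hX w _ (connMatrix g w x), ← covDerivBilin,
    covDerivBilin_metric hU hg hx, Matrix.zero_mul, zero_add, covDeriv]

end Coordinates

section Commutation

variable {U : Set (ι → ℝ)} {g L X : (ι → ℝ) → Matrix ι ι ℝ} {v : (ι → ℝ) → ι → ℝ} {x : ι → ℝ}

theorem lieBracket_const_left (hv : DifferentiableAt ℝ v x) (w : ι → ℝ) :
    VectorField.lieBracket ℝ (fun _ => w) v x = jacobian v x *ᵥ w := by
  simp [VectorField.lieBracket, jacobian_mulVec hv]

theorem curvForm_connMatrix_neg_jacobian (g : (ι → ℝ) → Matrix ι ι ℝ) (v : (ι → ℝ) → ι → ℝ)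
    (w x : ι → ℝ) :
    curvForm (fun _ => w) v (connMatrix g w) (fun y => -jacobian v y) x
      = connMatrix g (jacobian v x *ᵥ w) x - lieDerivConn g v w x := by
  simp only [curvForm, lieDerivConn, fderiv_fun_neg, _root_.neg_apply, Ring.lie_def]
  noncomm_ring

theorem contDiffOn_covDeriv (hU : IsOpen U) (hg : IsMetricOn g U) (hL : ContDiffOn ℝ (⊤ : ℕ∞) L U)
    (w : ι → ℝ) : ContDiffOn ℝ (⊤ : ℕ∞) (covDeriv g w L) U :=
  have hΓ := contDiffOn_connMatrix hU hg w
  contDiffOn_homDeriv hU hL contDiffOn_const hΓ hΓ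

theorem lieDerivEnd_congr (hU : IsOpen U) (hx : x ∈ U) (h : ∀ y ∈ U, X y = L y) :
    lieDerivEnd v X x = lieDerivEnd v L x := by
  have hentry (i j : ι) : (fun y => X y i j) =ᶠ[nhds x] fun y => L y i j :=
    eventually_of_mem (hU.mem_nhds hx) fun y hy => congrFun₂ (h y hy) i j
  simp only [lieDerivEnd, pd, (hentry _ _).fderiv_eq, h x hx]

theorem contDiffOn_lieDerivEnd (hU : IsOpen U) (hv : ContDiffOn ℝ (⊤ : ℕ∞) v U)
    (hL : ContDiffOn ℝ (⊤ : ℕ∞) L U) : ContDiffOn ℝ (⊤ : ℕ∞) (lieDerivEnd v L) U :=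
  have hJ := (contDiffOn_jacobian hU hv).neg
  (contDiffOn_homDeriv hU hL hv hJ hJ).congr fun _ hy =>
    lieDerivEnd_eq_homDeriv (differentiableAt_of_contDiffOn hU hy hL)

theorem contDiffOn_lieDerivMetric (hU : IsOpen U) (hg : ContDiffOn ℝ (⊤ : ℕ∞) g U)
    (hv : ContDiffOn ℝ (⊤ : ℕ∞) v U) : ContDiffOn ℝ (⊤ : ℕ∞) (lieDerivMetric g v) U :=
  have hJ := contDiffOn_jacobian hU hv
  (contDiffOn_homDeriv hU hg hv (contDiffOn_matrix_transpose hJ) hJ.neg).congr fun _ hy =>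
    lieDerivMetric_eq_homDeriv (differentiableAt_of_contDiffOn hU hy hg)

theorem covDeriv_lieDerivEnd (hU : IsOpen U) (hg : IsMetricOn g U)
    (hv : ContDiffOn ℝ (⊤ : ℕ∞) v U) (hL : ContDiffOn ℝ (⊤ : ℕ∞) L U) (hx : x ∈ U) (w : ι → ℝ) :
    covDeriv g w (lieDerivEnd v L) x
      = lieDerivEnd v (covDeriv g w L) x + covDeriv g (jacobian v x *ᵥ w) L x
        - ⁅lieDerivConn g v w x, L x⁆ := by
  have hvx := differentiableAt_of_contDiffOn hU hx hv
  have hΓ := differentiableAt_of_contDiffOn hU hx (contDiffOn_connMatrix hU hg w)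
  have hJ := (differentiableAt_of_contDiffOn hU hx (contDiffOn_jacobian hU hv)).fun_neg
  have hswap := homDeriv_homDeriv_sub_swap (a := fun _ => w) (b := v)
    (contDiffAt_two_of_contDiffOn hU hx hL) (differentiableAt_const w) hvx hΓ hJ hΓ hJ
  have hleft : homDeriv w _ _ (fun y => homDeriv (v y) _ _ L y) x
      = covDeriv g w (lieDerivEnd v L) x := homDeriv_congr hU hx (fun y hy =>
    (lieDerivEnd_eq_homDeriv (differentiableAt_of_contDiffOn hU hy hL)).symm) _ _ _
  have hright : lieDerivEnd v (covDeriv g w L) x = _ := lieDerivEnd_eq_homDeriv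
    (differentiableAt_of_contDiffOn hU hx (contDiffOn_covDeriv hU hg hL w))
  rw [lieBracket_const_left hvx, curvForm_connMatrix_neg_jacobian, homDeriv_sub_forms,
    sub_eq_iff_eq_add, hleft] at hswap
  rw [hswap, hright, Ring.lie_def, add_sub_assoc, add_comm]
  rfl

theorem covDerivBilin_lieDerivMetric (hU : IsOpen U) (hg : IsMetricOn g U)
    (hv : ContDiffOn ℝ (⊤ : ℕ∞) v U) (hx : x ∈ U) (w : ι → ℝ) :
    covDerivBilin g w (lieDerivMetric g v) x
      = (lieDerivConn g v w x)ᵀ * g x + g x * lieDerivConn g v w x := by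
  have hvx := differentiableAt_of_contDiffOn hU hx hv
  have hΓ := contDiffOn_connMatrix hU hg w
  have hJ := (contDiffOn_jacobian hU hv).neg
  have hΓx := differentiableAt_of_contDiffOn hU hx hΓ
  have hJx := differentiableAt_of_contDiffOn hU hx hJ
  have hΓt := differentiableAt_of_contDiffOn hU hx (contDiffOn_matrix_transpose hΓ).neg
  have hJt := differentiableAt_of_contDiffOn hU hx (contDiffOn_matrix_transpose hJ).neg
  have hswap := homDeriv_homDeriv_sub_swap (a := fun _ => w) (b := v)
    (contDiffAt_two_of_contDiffOn hU hx hg.contDiffOn)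
    (differentiableAt_const w) hvx hΓt hJt hΓx hJx
  have hleft : homDeriv w _ _ (fun y => homDeriv (v y) (-(-jacobian v y)ᵀ) _ g y) x
      = covDerivBilin g w (lieDerivMetric g v) x := homDeriv_congr hU hx (fun y hy => by
    rw [lieDerivMetric_eq_homDeriv (differentiableAt_of_contDiffOn hU hy hg.contDiffOn),
      transpose_neg, neg_neg]) _ _ _
  have hright : homDeriv (v x) (-(-jacobian v x)ᵀ) (-jacobian v x)
      (fun y => homDeriv w (-(connMatrix g w y)ᵀ) (connMatrix g w y) g y) x = 0 := by
    refine (homDeriv_congr hU hx (fun y hy => covDerivBilin_metric hU hg hy w) _ _ _).trans ?_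
    simp [homDeriv]
  rw [lieBracket_const_left hvx, curvForm_neg_transpose hΓx hJx, curvForm_connMatrix_neg_jacobian,
    hleft, hright, sub_zero, transpose_sub, neg_sub', homDeriv_sub_forms, ← covDerivBilin,
    covDerivBilin_metric hU hg hx] at hswap
  rw [hswap]
  noncomm_ring

end Commutation

/-- The endomorphism `g⁻¹ 𝓛_v g`, by which `v` infinitesimally strains the metric. -/
def lieStrain (g : (ι → ℝ) → Matrix ι ι ℝ) (v : (ι → ℝ) → ι → ℝ) (x : ι → ℝ) : Matrix ι ι ℝ :=
  (g x)⁻¹ * lieDerivMetric g v x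

/-- The endomorphism `A = H - (tr H / (n + 1)) Id`, where `H = g⁻¹ 𝓛_v g`, for which `-A σ` is the
Lie derivative of the weighted bivector `σ = |det g|^{1/(n+1)} g⁻¹`. -/
def projStrain (g : (ι → ℝ) → Matrix ι ι ℝ) (v : (ι → ℝ) → ι → ℝ) (x : ι → ℝ) : Matrix ι ι ℝ :=
  lieStrain g v x - ((lieStrain g v x).trace / (Fintype.card ι + 1)) • (1 : Matrix ι ι ℝ)

/-- The endomorphism `K` for which `K σ` is the Lie derivative of the weighted bivector `L σ`, where
`σ = |det g|^{1/(n+1)} g⁻¹`. -/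
def projLieDeriv (g : (ι → ℝ) → Matrix ι ι ℝ) (v : (ι → ℝ) → ι → ℝ)
    (L : (ι → ℝ) → Matrix ι ι ℝ) (x : ι → ℝ) : Matrix ι ι ℝ :=
  lieDerivEnd v L x - L x * projStrain g v x

section Projective

variable {U : Set (ι → ℝ)} {g L X : (ι → ℝ) → Matrix ι ι ℝ} {v : (ι → ℝ) → ι → ℝ} {x : ι → ℝ}

theorem contDiffOn_lieStrain (hU : IsOpen U) (hg : IsMetricOn g U)
    (hv : ContDiffOn ℝ (⊤ : ℕ∞) v U) : ContDiffOn ℝ (⊤ : ℕ∞) (lieStrain g v) U :=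
  (contDiffOn_matrix_inv hg.contDiffOn hg.nondeg).mul
    (contDiffOn_lieDerivMetric hU hg.contDiffOn hv)

theorem contDiffOn_projStrain (hU : IsOpen U) (hg : IsMetricOn g U)
    (hv : ContDiffOn ℝ (⊤ : ℕ∞) v U) : ContDiffOn ℝ (⊤ : ℕ∞) (projStrain g v) U :=
  have hH := contDiffOn_lieStrain hU hg hv
  hH.sub (((contDiffOn_linearMap_apply (traceLinearMap ι ℝ ℝ) hH).div_const _).smul
    contDiffOn_const)

theorem contDiffOn_projLieDeriv (hU : IsOpen U) (hg : IsMetricOn g U)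
    (hv : ContDiffOn ℝ (⊤ : ℕ∞) v U) (hL : ContDiffOn ℝ (⊤ : ℕ∞) L U) :
    ContDiffOn ℝ (⊤ : ℕ∞) (projLieDeriv g v L) U :=
  (contDiffOn_lieDerivEnd hU hv hL).sub (hL.mul (contDiffOn_projStrain hU hg hv))

theorem metric_mul_lieStrain (hgx : IsUnit (g x).det) :
    g x * lieStrain g v x = lieDerivMetric g v x :=
  mul_nonsing_inv_cancel_left _ _ hgx

theorem lieDerivMetric_transpose (hU : IsOpen U) (hg : IsMetricOn g U) (hx : x ∈ U) :
    (lieDerivMetric g v x)ᵀ = lieDerivMetric g v x := by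
  have hgx := differentiableAt_of_contDiffOn hU hx hg.contDiffOn
  rw [lieDerivMetric_eq_homDeriv hgx, transpose_homDeriv hgx, transpose_neg, transpose_transpose,
    neg_neg, homDeriv_congr hU hx hg.symm]

theorem metricAdjoint_lieStrain (hU : IsOpen U) (hg : IsMetricOn g U) (hx : x ∈ U) :
    metricAdjoint (g x) (lieStrain g v x) = lieStrain g v x := by
  rw [metricAdjoint_eq_self_iff (hg.symm x hx) (hg.nondeg x hx),
    metric_mul_lieStrain (hg.nondeg x hx), lieDerivMetric_transpose hU hg hx]

theorem metricAdjoint_projStrain (hU : IsOpen U) (hg : IsMetricOn g U) (hx : x ∈ U) :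
    metricAdjoint (g x) (projStrain g v x) = projStrain g v x := by
  rw [projStrain, map_sub, map_smul, metricAdjoint_one (hg.nondeg x hx),
    metricAdjoint_lieStrain hU hg hx]

theorem contDiffOn_metricAdjoint (hg : IsMetricOn g U) (hX : ContDiffOn ℝ (⊤ : ℕ∞) X U) :
    ContDiffOn ℝ (⊤ : ℕ∞) (fun y => metricAdjoint (g y) (X y)) U :=
  (contDiffOn_matrix_inv hg.contDiffOn hg.nondeg).mul
    ((contDiffOn_matrix_transpose hX).mul hg.contDiffOn)

theorem lieDerivEnd_metricAdjoint (hU : IsOpen U) (hg : IsMetricOn g U)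
    (hX : ContDiffOn ℝ (⊤ : ℕ∞) X U) (hx : x ∈ U) :
    lieDerivEnd v (fun y => metricAdjoint (g y) (X y)) x
      = metricAdjoint (g x) (lieDerivEnd v X x)
        + ⁅metricAdjoint (g x) (X x), lieStrain g v x⁆ := by
  have hdet := hg.nondeg x hx
  have hgx := differentiableAt_of_contDiffOn hU hx hg.contDiffOn
  have hXx := differentiableAt_of_contDiffOn hU hx hX
  have hXt := differentiableAt_of_contDiffOn hU hx (contDiffOn_matrix_transpose hX)
  have hadj := differentiableAt_of_contDiffOn hU hx (contDiffOn_metricAdjoint hg hX)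
  have hleibniz := homDeriv_congr hU hx (fun y hy => mul_metricAdjoint (hg.nondeg y hy) (X y))
    (v x) (jacobian v x)ᵀ (-jacobian v x)
  rw [homDeriv_mul hgx hadj _ _ (-jacobian v x), homDeriv_mul hXt hgx _ _ (jacobian v x)ᵀ,
    ← lieDerivMetric_eq_homDeriv hgx, ← lieDerivEnd_eq_homDeriv hadj,
    ← metric_mul_lieStrain hdet] at hleibniz
  have htranspose := transpose_homDeriv hXx (v x) (-jacobian v x) (-jacobian v x)
  rw [← lieDerivEnd_eq_homDeriv hXx, transpose_neg, neg_neg] at htranspose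
  rw [← htranspose, ← mul_metricAdjoint hdet, ← Matrix.mul_assoc, ← mul_metricAdjoint hdet,
    Matrix.mul_assoc, Matrix.mul_assoc, ← Matrix.mul_add, ← Matrix.mul_add] at hleibniz
  have hcancel := ((isUnit_iff_isUnit_det _).2 hdet).mul_left_cancel hleibniz
  rw [Ring.lie_def, ← add_sub_assoc, ← hcancel, add_sub_cancel_left]

theorem lieDerivEnd_metricSymm (hU : IsOpen U) (hg : IsMetricOn g U)
    (hX : ContDiffOn ℝ (⊤ : ℕ∞) X U) (hx : x ∈ U) :
    lieDerivEnd v (fun y => metricSymm (g y) (X y)) x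
      = metricSymm (g x) (lieDerivEnd v X x)
        + (1 / 2 : ℝ) • ⁅metricAdjoint (g x) (X x), lieStrain g v x⁆ := by
  have hXx := differentiableAt_of_contDiffOn hU hx hX
  have hadj := differentiableAt_of_contDiffOn hU hx (contDiffOn_metricAdjoint hg hX)
  have hsum := hXx.fun_add hadj
  simp only [metricSymm_apply]
  rw [lieDerivEnd_eq_homDeriv (hsum.fun_const_smul _), homDeriv_const_smul hsum,
    homDeriv_add hXx hadj, ← lieDerivEnd_eq_homDeriv hXx, ← lieDerivEnd_eq_homDeriv hadj,
    lieDerivEnd_metricAdjoint hU hg hX hx, ← add_assoc, smul_add _ (_ + _)]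

theorem lie_projStrain (X : Matrix ι ι ℝ) : ⁅X, projStrain g v x⁆ = ⁅X, lieStrain g v x⁆ := by
  rw [projStrain, Ring.lie_def, Ring.lie_def, Matrix.mul_sub, Matrix.sub_mul, Matrix.mul_smul,
    Matrix.smul_mul, Matrix.one_mul, Matrix.mul_one, sub_sub_sub_cancel_right]

theorem metricAdjoint_projLieDeriv (hU : IsOpen U) (hg : IsMetricOn g U)
    (hL : ContDiffOn ℝ (⊤ : ℕ∞) L U)
    (hLsa : ∀ y ∈ U, metricAdjoint (g y) (L y) = L y) (hx : x ∈ U) :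
    metricAdjoint (g x) (projLieDeriv g v L x) = projLieDeriv g v L x := by
  have hlie := lieDerivEnd_metricAdjoint (v := v) hU hg hL hx
  rw [lieDerivEnd_congr hU hx hLsa, hLsa x hx, ← lie_projStrain, ← sub_eq_iff_eq_add,
    Ring.lie_def] at hlie
  rw [projLieDeriv, map_sub, metricAdjoint_mul (hg.nondeg x hx), hLsa x hx,
    metricAdjoint_projStrain hU hg hx, ← hlie]
  abel

theorem covDeriv_lieStrain (hU : IsOpen U) (hg : IsMetricOn g U)
    (hv : ContDiffOn ℝ (⊤ : ℕ∞) v U) (hx : x ∈ U) (w : ι → ℝ) :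
    covDeriv g w (lieStrain g v) x
      = lieDerivConn g v w x + metricAdjoint (g x) (lieDerivConn g v w x) := by
  have hdet := hg.nondeg x hx
  refine ((isUnit_iff_isUnit_det _).2 hdet).mul_left_cancel ?_
  have hH := differentiableAt_of_contDiffOn hU hx (contDiffOn_lieStrain hU hg hv)
  rw [metric_mul_covDeriv hU hg hx hH, covDerivBilin,
    homDeriv_congr hU hx fun y hy => metric_mul_lieStrain (hg.nondeg y hy), ← covDerivBilin,
    covDerivBilin_lieDerivMetric hU hg hv hx, Matrix.mul_add, mul_metricAdjoint hdet, add_comm]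

theorem covDeriv_projStrain (hU : IsOpen U) (hg : IsMetricOn g U)
    (hv : ContDiffOn ℝ (⊤ : ℕ∞) v U) (hx : x ∈ U) {φ : ι → ℝ} {w : ι → ℝ}
    (hφ : lieDerivConn g v w x = vecMulVec w φ + (w ⬝ᵥ φ) • (1 : Matrix ι ι ℝ)) :
    covDeriv g w (projStrain g v) x = metricSymm (g x) (vecMulVec w ((2 : ℝ) • φ)) := by
  have hdet := hg.nondeg x hx
  have hH := differentiableAt_of_contDiffOn hU hx (contDiffOn_lieStrain hU hg hv)
  have htr : DifferentiableAt ℝ (fun y => (lieStrain g v y).trace) x :=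
    differentiableAt_linearMap_apply (traceLinearMap ι ℝ ℝ) hH
  have hdH := covDeriv_lieStrain hU hg hv hx w
  have htrace : fderiv ℝ (fun y => (lieStrain g v y).trace) x w
      = 2 * (Fintype.card ι + 1) * (w ⬝ᵥ φ) := by
    rw [← trace_homDeriv hH w (connMatrix g w x), ← covDeriv, hdH, trace_add,
      trace_metricAdjoint hdet, hφ, trace_add, trace_vecMulVec, trace_smul, trace_one, smul_eq_mul]
    ring
  have hdiv : fderiv ℝ (fun y => (lieStrain g v y).trace / (Fintype.card ι + 1)) x w
      = 2 * (w ⬝ᵥ φ) := by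
    simp only [div_eq_mul_inv]
    rw [fderiv_mul_const htr, _root_.smul_apply, htrace, smul_eq_mul]
    field_simp
  have hdivx : DifferentiableAt ℝ
      (fun y => (lieStrain g v y).trace / ((Fintype.card ι : ℝ) + 1)) x := by
    simpa only [div_eq_mul_inv] using htr.mul_const _
  have hsub : covDeriv g w (projStrain g v) x = _ :=
    homDeriv_sub hH (hdivx.smul_const (1 : Matrix ι ι ℝ)) _ _ _
  rw [hsub, homDeriv_smul_one hdivx, ← covDeriv, hdH, hφ, hdiv]
  simp only [metricSymm, vecMulVec_smul, map_add, map_smul, metricAdjoint_one hdet,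
    LinearMap.smul_apply, LinearMap.add_apply, LinearMap.id_apply]
  module

theorem lieDerivEnd_vecMulVec {l : (ι → ℝ) → ι → ℝ} (hl : DifferentiableAt ℝ l x) (w : ι → ℝ) :
    lieDerivEnd v (fun y => vecMulVec w (l y)) x + vecMulVec (jacobian v x *ᵥ w) (l x)
      = vecMulVec w (fderiv ℝ l x (v x) + l x ᵥ* jacobian v x) := by
  have hE : DifferentiableAt ℝ (fun y => vecMulVec w (l y)) x :=
    differentiableAt_linearMap_apply (vecMulVecBilin ℝ ℝ w) hl
  rw [lieDerivEnd_eq_homDeriv hE, homDeriv_vecMulVec hl, vecMul_neg, sub_neg_eq_add, neg_mulVec,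
    neg_vecMulVec, neg_add_cancel_right]

theorem covDeriv_projLieDeriv (hU : IsOpen U) (hg : IsMetricOn g U)
    (hv : ContDiffOn ℝ (⊤ : ℕ∞) v U) (hL : ContDiffOn ℝ (⊤ : ℕ∞) L U)
    (hLsa : ∀ y ∈ U, metricAdjoint (g y) (L y) = L y) (hLcomp : Compatible g L U) (hx : x ∈ U)
    {φ : ι → ℝ} {w : ι → ℝ}
    (hφ : lieDerivConn g v w x = vecMulVec w φ + (w ⬝ᵥ φ) • (1 : Matrix ι ι ℝ)) :
    covDeriv g w (projLieDeriv g v L) x = metricSymm (g x) (vecMulVec w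
      (fderiv ℝ (dTrace L) x (v x) + dTrace L x ᵥ* jacobian v x
        - dTrace L x ᵥ* projStrain g v x - (2 : ℝ) • (φ ᵥ* L x))) := by
  have hdet := hg.nondeg x hx
  have hlie := contDiffOn_lieDerivEnd hU hv hL
  have hA := contDiffOn_projStrain hU hg hv
  have hl := contDiffOn_dTrace hU hL
  have hcomp := (compatible_iff_covDeriv hU hL).1 hLcomp
  have hE : ContDiffOn ℝ (⊤ : ℕ∞) (fun y => vecMulVec w (dTrace L y)) U :=
    contDiffOn_vecMulVec contDiffOn_const hl
  have hLx := differentiableAt_of_contDiffOn hU hx hL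
  have hAx := differentiableAt_of_contDiffOn hU hx hA
  have hsplit : covDeriv g w (projLieDeriv g v L) x = covDeriv g w (lieDerivEnd v L) x
      - (covDeriv g w L x * projStrain g v x + L x * covDeriv g w (projStrain g v) x) :=
    (homDeriv_sub (differentiableAt_of_contDiffOn hU hx hlie) (hLx.fun_mul hAx) _ _ _).trans
      (congrArg _ (homDeriv_mul hLx hAx _ _ _ _))
  have hlieE := lieDerivEnd_vecMulVec (v := v) (differentiableAt_of_contDiffOn hU hx hl) w
  have hbracket : ⁅lieDerivConn g v w x, L x⁆ = ⁅vecMulVec w φ, L x⁆ := by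
    simp [hφ, Ring.lie_def, Matrix.add_mul, Matrix.mul_add]
  have hlieCov : lieDerivEnd v (covDeriv g w L) x = _ :=
    (lieDerivEnd_congr hU hx fun y hy => hcomp y hy w).trans (lieDerivEnd_metricSymm hU hg hE hx)
  rw [hsplit, covDeriv_lieDerivEnd hU hg hv hL hx, hlieCov, hcomp x hx, hcomp x hx, hbracket,
    covDeriv_projStrain hU hg hv hx hφ, metricSymm_mul hdet _ (metricAdjoint_projStrain hU hg hx),
    lie_projStrain, vecMulVec_smul, vecMulVec_sub, vecMulVec_sub, vecMulVec_smul, ← vecMulVec_mul,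
    ← vecMulVec_mul, map_sub, map_sub, ← hlieE, ← lie_add_mul_metricSymm hdet _ (hLsa x hx),
    map_add]
  abel

end Projective

/-- `L` is a smooth `g`-self-adjoint solution on `U` of the compatibility equation: an element of
the space whose dimension is the degree of mobility of `g`. -/
structure IsCompatibleTensor (g L : (ι → ℝ) → Matrix ι ι ℝ) (U : Set (ι → ℝ)) : Prop where
  smooth : ∀ i j, ContDiffOn ℝ (⊤ : ℕ∞) (fun x => L x i j) U
  selfAdjoint : ∀ x ∈ U, (g x * L x)ᵀ = g x * L x
  compatible : Compatible g L U

section Main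

variable {U : Set (ι → ℝ)} {g L X : (ι → ℝ) → Matrix ι ι ℝ} {v : (ι → ℝ) → ι → ℝ} {x : ι → ℝ}

theorem isCompatibleTensor_of_covDeriv (hU : IsOpen U) (hg : IsMetricOn g U)
    (hX : ContDiffOn ℝ (⊤ : ℕ∞) X U) (hXsa : ∀ x ∈ U, metricAdjoint (g x) (X x) = X x)
    (h : ∀ x ∈ U, ∃ ω, ∀ w, covDeriv g w X x = metricSymm (g x) (vecMulVec w ω)) :
    IsCompatibleTensor g X U where
  smooth := contDiffOn_matrix_iff.1 hX
  selfAdjoint x hx := (metricAdjoint_eq_self_iff (hg.symm x hx) (hg.nondeg x hx)).1 (hXsa x hx)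
  compatible := compatible_of_covDeriv hU hg hX h

theorem isCompatibleTensor_projStrain (hU : IsOpen U) (hg : IsMetricOn g U)
    (hv : IsProjectiveVF g v U) : IsCompatibleTensor g (projStrain g v) U := by
  obtain ⟨φ, hφ⟩ := hv.exists_lieDerivConn_eq hU hg
  exact isCompatibleTensor_of_covDeriv hU hg (contDiffOn_projStrain hU hg hv.1)
    (fun x hx => metricAdjoint_projStrain hU hg hx)
    fun x hx => ⟨_, fun w => covDeriv_projStrain hU hg hv.1 hx (hφ x hx w)⟩

theorem IsCompatibleTensor.projLieDeriv (hU : IsOpen U) (hg : IsMetricOn g U)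
    (hv : IsProjectiveVF g v U) (hL : IsCompatibleTensor g L U) :
    IsCompatibleTensor g (projLieDeriv g v L) U := by
  obtain ⟨φ, hφ⟩ := hv.exists_lieDerivConn_eq hU hg
  have hLsmooth := contDiffOn_matrix_iff.2 hL.smooth
  have hLsa (x) (hx : x ∈ U) : metricAdjoint (g x) (L x) = L x :=
    (metricAdjoint_eq_self_iff (hg.symm x hx) (hg.nondeg x hx)).2 (hL.selfAdjoint x hx)
  exact isCompatibleTensor_of_covDeriv hU hg (contDiffOn_projLieDeriv hU hg hv.1 hLsmooth)
    (fun x hx => metricAdjoint_projLieDeriv hU hg hLsmooth hLsa hx) fun x hx =>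
      ⟨_, fun w => covDeriv_projLieDeriv hU hg hv.1 hLsmooth hLsa hL.compatible hx (hφ x hx w)⟩

theorem fderiv_log_abs_det_eq_trace_lieDerivEnd (hL : DifferentiableAt ℝ L x)
    (hdet : IsUnit (L x).det) :
    fderiv ℝ (fun y => Real.log |(L y).det|) x (v x) = ((L x)⁻¹ * lieDerivEnd v L x).trace := by
  rw [fderiv_log_abs_det hL hdet, lieDerivEnd_eq_homDeriv hL, homDeriv, Matrix.mul_sub,
    Matrix.mul_add, nonsing_inv_mul_cancel_left _ _ hdet, ← Matrix.mul_assoc, trace_sub, trace_add,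
    trace_mul_cycle, mul_nonsing_inv _ hdet, Matrix.one_mul, add_sub_cancel_right]

theorem trace_inv_mul_quadratic {m R : Type*} [Fintype m] [DecidableEq m] [CommRing R]
    {A : Matrix m m R} (hA : IsUnit A.det) (a b c : R) :
    (A⁻¹ * (a • (A * A) + b • A + c • 1)).trace
      = a * A.trace + b * Fintype.card m + c * A⁻¹.trace := by
  simp only [Matrix.mul_add, Matrix.mul_smul, nonsing_inv_mul_cancel_left _ _ hA,
    nonsing_inv_mul _ hA, Matrix.mul_one, trace_add, trace_smul, trace_one, smul_eq_mul]

theorem lieDerivEnd_eq_log_abs_det_of_quadratic (hL : DifferentiableAt ℝ L x)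
    (hdet : IsUnit (L x).det) {a b c : ℝ}
    (h : lieDerivEnd v L x = a • (L x * L x) + b • L x + c • 1) :
    lieDerivEnd v L x = a • (L x * L x)
      + (-(∑ m, v x m * pd m (fun y => Real.log |(L y).det|) x) + a * (L x).trace
          + c * ((L x)⁻¹).trace + (Fintype.card ι + 1) * b) • L x + c • 1 := by
  have hlog := fderiv_log_abs_det_eq_trace_lieDerivEnd (v := v) hL hdet
  rw [h, trace_inv_mul_quadratic hdet, fderiv_apply_eq_sum_pd] at hlog
  rw [h, hlog]
  congr 3
  ring

theorem stmt7_general (hU : IsOpen U) (hg : IsMetricOn g U) (hv : IsProjectiveVF g v U)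
    (hL : IsCompatibleTensor g L U) (hLdet : ∀ x ∈ U, IsUnit (L x).det)
    (hspan : ∀ L', IsCompatibleTensor g L' U →
      ∃ a b : ℝ, ∀ x ∈ U, L' x = a • L x + b • (1 : Matrix ι ι ℝ)) :
    ∃ α γ ν : ℝ, ∀ x ∈ U,
      lieDerivEnd v L x
        = α • (L x * L x)
          + (-(∑ m, v x m * pd m (fun y => Real.log |(L y).det|) x)
              + α * (L x).trace + γ * ((L x)⁻¹).trace + ν) • L x
          + γ • (1 : Matrix ι ι ℝ) := by
  obtain ⟨a, b, hA⟩ := hspan _ (isCompatibleTensor_projStrain hU hg hv)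
  obtain ⟨c, d, hK⟩ := hspan _ (hL.projLieDeriv hU hg hv)
  refine ⟨a, d, (Fintype.card ι + 1) * (b + c), fun x hx => ?_⟩
  have hquadratic : lieDerivEnd v L x = a • (L x * L x) + (b + c) • L x + d • 1 := by
    have h := hK x hx
    rw [projLieDeriv, sub_eq_iff_eq_add, hA x hx] at h
    rw [h, Matrix.mul_add, Matrix.mul_smul, Matrix.mul_smul, Matrix.mul_one]
    module
  have hLx := differentiableAt_of_contDiffOn hU hx (contDiffOn_matrix_iff.2 hL.smooth)
  exact lieDerivEnd_eq_log_abs_det_of_quadratic hLx (hLdet x hx) hquadratic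

end Main

theorem stmt7 {n : ℕ} (U : Set (Fin n → ℝ)) (hU : IsOpen U) (hconn : IsConnected U)
    (p : Fin n → ℝ) (hp : p ∈ U)
    (g : (Fin n → ℝ) → Matrix (Fin n) (Fin n) ℝ) (hg : IsMetricOn g U)
    (v : (Fin n → ℝ) → Fin n → ℝ) (hv : IsProjectiveVF g v U)
    (L : (Fin n → ℝ) → Matrix (Fin n) (Fin n) ℝ)
    (hLsmooth : ∀ i j, ContDiffOn ℝ (⊤ : ℕ∞) (fun x => L x i j) U)
    -- `L` is `g`-self-adjoint
    (hLsa : ∀ x ∈ U, (g x * L x)ᵀ = g x * L x)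
    -- `L` is compatible with `g` and nondegenerate
    (hLcomp : Compatible g L U)
    (hLdet : ∀ x ∈ U, IsUnit (L x).det)
    -- the degree of mobility of `g` is 2 and `{Id, L}` is a basis of the space of
    -- (1,1)-tensors compatible with `g`: every compatible tensor is a constant
    -- linear combination of `Id` and `L` …
    (hspan : ∀ L' : (Fin n → ℝ) → Matrix (Fin n) (Fin n) ℝ,
      (∀ i j, ContDiffOn ℝ (⊤ : ℕ∞) (fun x => L' x i j) U) →
      (∀ x ∈ U, (g x * L' x)ᵀ = g x * L' x) →
      Compatible g L' U →
      ∃ a b : ℝ, ∀ x ∈ U, L' x = a • L x + b • (1 : Matrix (Fin n) (Fin n) ℝ))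
    -- … and `Id`, `L` are linearly independent
    (hindep : ∀ a b : ℝ,
      (∀ x ∈ U, a • L x + b • (1 : Matrix (Fin n) (Fin n) ℝ) = 0) → a = 0 ∧ b = 0) :
    -- then `𝓛_v L = α·L² + β·L + γ·Id` with
    -- `β = −𝓛_v(log|det L|) + α·tr L + γ·tr L⁻¹ + ν` for some constants `α, γ, ν`
    ∃ α γ ν : ℝ, ∀ x ∈ U,
      lieDerivEnd v L x
        = α • (L x * L x)
          + ((- (∑ m, v x m * pd m (fun y => Real.log |(L y).det|) x))
              + α * (L x).trace + γ * ((L x)⁻¹).trace + ν) • L x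
          + γ • (1 : Matrix (Fin n) (Fin n) ℝ) := by
  exact stmt7_general hU hg hv ⟨hLsmooth, hLsa, hLcomp⟩ hLdet fun L' hL' =>
    hspan L' hL'.smooth hL'.selfAdjoint hL'.compatible
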